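/- arXiv:2209.04664 — 4 statements merged into one kernel-verified Lean document; each statement's English description precedes it below -/
import Mathlib

section
/- Let S be a real symmetric d×d matrix of full rank with exactly m positive eigenvalues, ν a Borel probability measure on ℝ^d with finite second moment, γ an optimal plan for the primal problem, and μ the x-marginal of γ. Then γ solves the unconstrained optimal transport problem: ∫S(x,y) dγ = max over π ∈ Π(μ,ν) of ∫S(x,y) dπ, where Π(μ,ν) is the set of Borel probability measures on ℝ^d×ℝ^d with x-marginal μ and y-marginal ν. -/
/-!
The proof is a first-variation argument. Let `π` be a coupling of `μ` and `ν`, where `μ` is the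
`x`-marginal of `γ`, and let `g(x) = E_π[y | x]`. Under the mixture `(1 - b) γ + b π` the label
`x` still has law `μ` and `y` still has law `ν`, while the mean of `y` given `x` is
`(1 - b) x + b g(x)`. Moving each label to this mean gives an element of `Γ(ν)`
(`perturb_MGamma`), and conditioning on the label shows (`perturb_value`) that
`∫ S(x,y)` over it equals
`(1 - b)² ∫ S(x,y) dγ + 2 b (1 - b) ∫ S(x,y) dπ + b² ∫ S(g(x),g(x)) dμ`.
At `b = 0` this is the optimal value, so its derivative there, `2 (∫ S dπ - ∫ S dγ)`, is
nonpositive.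
-/

open MeasureTheory Filter Set Matrix

noncomputable section

/-- The bilinear form of the matrix `S`: `S(x,y) = ⟨x, Sy⟩`. -/
def Sb {d : ℕ} (S : Matrix (Fin d) (Fin d) ℝ) (x y : Fin d → ℝ) : ℝ :=
  x ⬝ᵥ S.mulVec y

/-- A set `G` is `S`-monotone if `S(x-y,x-y) ≥ 0` for all `x, y ∈ G`. -/
def SMono {d : ℕ} (S : Matrix (Fin d) (Fin d) ℝ) (G : Set (Fin d → ℝ)) : Prop :=
  ∀ x ∈ G, ∀ y ∈ G, 0 ≤ Sb S (x - y) (x - y)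

/-- Maximal `S`-monotone set. -/
def MaxSMono {d : ℕ} (S : Matrix (Fin d) (Fin d) ℝ) (G : Set (Fin d → ℝ)) : Prop :=
  SMono S G ∧ ∀ H, SMono S H → G ⊆ H → H = G

/-- The Fitzpatrick function `ψ_G(y) = sup_{x∈G} (S(x,y) - S(x,x)/2)`, with values in
`ℝ ∪ {+∞}` (modeled in `EReal`). -/
def fitz {d : ℕ} (S : Matrix (Fin d) (Fin d) ℝ) (G : Set (Fin d → ℝ))
    (y : Fin d → ℝ) : EReal :=
  ⨆ x ∈ G, ((Sb S x y - Sb S x x / 2 : ℝ) : EReal)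

/-- Positive part of an extended real number, in `ℝ≥0∞`. -/
def epos (x : EReal) : ENNReal := if x = ⊤ then ⊤ else ENNReal.ofReal x.toReal

/-- Integral of an `EReal`-valued function: positive part minus negative part. -/
def eInt {α : Type*} [MeasurableSpace α] (μ : Measure α) (f : α → EReal) : EReal :=
  ((∫⁻ a, epos (f a) ∂μ : ENNReal) : EReal) - ((∫⁻ a, epos (-(f a)) ∂μ : ENNReal) : EReal)

/-- The martingale property of a measure `γ(dx,dy)` on `ℝ^d × ℝ^d`: the conditional
expectation of `y` given `x` equals `x`, `γ`-a.s. -/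
def MartProp {d : ℕ} (γ : Measure ((Fin d → ℝ) × (Fin d → ℝ))) : Prop :=
  γ[(fun p => p.2) | MeasurableSpace.comap Prod.fst inferInstance] =ᵐ[γ] fun p => p.1

/-- `γ ∈ Γ(ν)`: probability measures on `ℝ^d × ℝ^d` with finite second moment,
`y`-marginal `ν` and the martingale property. -/
def MGamma {d : ℕ} (ν : Measure (Fin d → ℝ))
    (γ : Measure ((Fin d → ℝ) × (Fin d → ℝ))) : Prop :=
  IsProbabilityMeasure γ ∧ γ.map Prod.snd = ν ∧
    Integrable (fun p => ‖p.1‖ ^ 2 + ‖p.2‖ ^ 2) γ ∧ MartProp γ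

/-- Value of the primal problem: `(1/2) ∫ S(x,y) dγ`. -/
def primalVal {d : ℕ} (S : Matrix (Fin d) (Fin d) ℝ)
    (γ : Measure ((Fin d → ℝ) × (Fin d → ℝ))) : ℝ :=
  (1 / 2) * ∫ p, Sb S p.1 p.2 ∂γ

/-- `γ` is an optimal plan for the primal problem. -/
def PrimalOpt {d : ℕ} (S : Matrix (Fin d) (Fin d) ℝ) (ν : Measure (Fin d → ℝ))
    (γ : Measure ((Fin d → ℝ) × (Fin d → ℝ))) : Prop :=
  MGamma ν γ ∧ ∀ γ', MGamma ν γ' → primalVal S γ' ≤ primalVal S γ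

/-- `G` is an optimal set for the dual problem: minimize `∫ ψ_G dν` over maximal
`S`-monotone sets. -/
def DualOpt {d : ℕ} (S : Matrix (Fin d) (Fin d) ℝ) (ν : Measure (Fin d → ℝ))
    (G : Set (Fin d → ℝ)) : Prop :=
  MaxSMono S G ∧ ∀ H, MaxSMono S H → eInt ν (fitz S G) ≤ eInt ν (fitz S H)

/-- The support of a measure: points all of whose neighborhoods have positive measure. -/
def msupp {α : Type*} [TopologicalSpace α] [MeasurableSpace α] (μ : Measure α) : Set α :=
  {x | ∀ U ∈ nhds x, μ U ≠ 0}

/-- The `S`-projection on `G`: minimizers over `G` of `z ↦ S(z-y,z-y)`. -/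
def SProj {d : ℕ} (S : Matrix (Fin d) (Fin d) ℝ) (G : Set (Fin d → ℝ))
    (y : Fin d → ℝ) : Set (Fin d → ℝ) :=
  {x ∈ G | ∀ z ∈ G, Sb S (x - y) (x - y) ≤ Sb S (z - y) (z - y)}

/-- The inverse image of the projection: `P_G^{-1}(x) = {y : x ∈ P_G(y)}`. -/
def SProjInv {d : ℕ} (S : Matrix (Fin d) (Fin d) ℝ) (G : Set (Fin d → ℝ))
    (x : Fin d → ℝ) : Set (Fin d → ℝ) :=
  {y | x ∈ SProj S G y}

/-- `Q_G(x) = ∪_{n ≥ 1} Q_G^{1/n}(x)`, where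
`Q_G^ε(x) = {y ∈ P_G^{-1}(x) : x + ε (x - y) ∈ P_G^{-1}(x)}`. -/
def QG {d : ℕ} (S : Matrix (Fin d) (Fin d) ℝ) (G : Set (Fin d → ℝ))
    (x : Fin d → ℝ) : Set (Fin d → ℝ) :=
  ⋃ n : ℕ, {y ∈ SProjInv S G x |
    x + ((1 : ℝ) / (n + 1)) • (x - y) ∈ SProjInv S G x}


/-- The form `Sb S` as a continuous bilinear map. -/
def SbL {d : ℕ} (S : Matrix (Fin d) (Fin d) ℝ) :
    (Fin d → ℝ) →L[ℝ] (Fin d → ℝ) →L[ℝ] ℝ :=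
  LinearMap.toContinuousBilinearMap (Matrix.toBilin' S)

lemma SbL_apply {d : ℕ} (S : Matrix (Fin d) (Fin d) ℝ) (x y : Fin d → ℝ) :
    SbL S x y = Sb S x y := by
  simp only [SbL, LinearMap.toContinuousBilinearMap_apply, Matrix.toBilin'_apply', Sb]

lemma Sb_comm {d : ℕ} {S : Matrix (Fin d) (Fin d) ℝ} (hS : S.IsHermitian)
    (x y : Fin d → ℝ) : Sb S x y = Sb S y x := by
  have hT : Sᵀ = S := by simpa [Matrix.IsHermitian] using hS
  unfold Sb
  rw [dotProduct_comm, ← Matrix.vecMul_transpose, hT, Matrix.dotProduct_mulVec]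

/-- `g` is a barycenter map of `ρ(dx,dy)`: a measurable function with
`E_ρ[y | x] = g(x)`. The martingale property is the case `g = id`. -/
def IsBary {d : ℕ} (ρ : Measure ((Fin d → ℝ) × (Fin d → ℝ)))
    (g : (Fin d → ℝ) → (Fin d → ℝ)) : Prop :=
  Measurable g ∧
    ρ[(fun p => p.2) | MeasurableSpace.comap Prod.fst inferInstance] =ᵐ[ρ] fun p => g p.1

/-- Barycenter maps exist, by the Doob-Dynkin lemma. -/
lemma exists_isBary {d : ℕ} (ρ : Measure ((Fin d → ℝ) × (Fin d → ℝ))) :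
    ∃ g, IsBary ρ g := by
  obtain ⟨g, hg, h⟩ := (stronglyMeasurable_condExp
    (m := MeasurableSpace.comap Prod.fst inferInstance) (μ := ρ)
    (f := fun p : (Fin d → ℝ) × (Fin d → ℝ) => p.2)).exists_eq_measurable_comp
  exact ⟨g, hg.measurable, by rw [h]; rfl⟩

lemma IsBary.memLp {d : ℕ} {ρ : Measure ((Fin d → ℝ) × (Fin d → ℝ))}
    {g : (Fin d → ℝ) → (Fin d → ℝ)} (hg : IsBary ρ g)
    (h2 : MemLp (fun p => p.2) 2 ρ) : MemLp g 2 (ρ.map Prod.fst) := by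
  rw [memLp_map_measure_iff hg.1.aestronglyMeasurable measurable_fst.aemeasurable]
  exact (memLp_congr_ae hg.2).1 (h2.condExp one_le_two)

lemma IsBary.setIntegral {d : ℕ} {ρ : Measure ((Fin d → ℝ) × (Fin d → ℝ))}
    [IsFiniteMeasure ρ] {g : (Fin d → ℝ) → (Fin d → ℝ)} (hg : IsBary ρ g)
    (h2 : MemLp (fun p => p.2) 2 ρ) {A : Set (Fin d → ℝ)} (hA : MeasurableSet A) :
    ∫ p in Prod.fst ⁻¹' A, p.2 ∂ρ = ∫ x in A, g x ∂(ρ.map Prod.fst) := by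
  rw [setIntegral_map hA hg.1.aestronglyMeasurable measurable_fst.aemeasurable,
    ← setIntegral_condExp measurable_fst.comap_le (h2.integrable one_le_two) ⟨A, hA, rfl⟩]
  exact integral_congr_ae (ae_restrict_of_ae hg.2)

/-- Pull-out property: integrating `S(f(x), y)` only sees the barycenter of `y`. -/
lemma IsBary.integral_Sb {d : ℕ} {ρ : Measure ((Fin d → ℝ) × (Fin d → ℝ))}
    [IsFiniteMeasure ρ] {g : (Fin d → ℝ) → (Fin d → ℝ)} (hg : IsBary ρ g)
    (h2 : MemLp (fun p => p.2) 2 ρ) (S : Matrix (Fin d) (Fin d) ℝ)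
    {f : (Fin d → ℝ) → (Fin d → ℝ)} (hf : Measurable f)
    (hf2 : MemLp f 2 (ρ.map Prod.fst)) :
    ∫ p, Sb S (f p.1) p.2 ∂ρ = ∫ x, Sb S (f x) (g x) ∂(ρ.map Prod.fst) := by
  have hf2' : MemLp (fun p : (Fin d → ℝ) × (Fin d → ℝ) => f p.1) 2 ρ :=
    (memLp_map_measure_iff hf.aestronglyMeasurable measurable_fst.aemeasurable).1 hf2
  have hfm : StronglyMeasurable[MeasurableSpace.comap Prod.fst inferInstance]
      (fun p : (Fin d → ℝ) × (Fin d → ℝ) => f p.1) :=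
    (hf.comp (comap_measurable Prod.fst)).stronglyMeasurable
  have hpull := condExp_bilin_of_stronglyMeasurable_left (SbL S) hfm
    (memLp_one_iff_integrable.1 ((SbL S).memLp_of_bilin 1 hf2' h2)) (h2.integrable one_le_two)
  simp_rw [← SbL_apply]
  rw [integral_map measurable_fst.aemeasurable
      ((SbL S).aestronglyMeasurable_comp₂ hf.aestronglyMeasurable hg.1.aestronglyMeasurable),
    ← integral_condExp measurable_fst.comap_le]
  refine integral_congr_ae ?_
  filter_upwards [hpull, hg.2] with p h1 h2
  rw [h1, h2]

/-- The competitor built from the mixture `a γ + b π`: with `g` a barycenter map of `π`,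
each label `x` is moved to `a x + b g(x)`. This is the mean of `y` given `x` under the mixture
when `a + b = 1`, `γ` is a martingale plan, and `γ` and `π` have the same `x`-marginal. -/
def perturb {d : ℕ} (a b : NNReal) (γ π : Measure ((Fin d → ℝ) × (Fin d → ℝ)))
    (g : (Fin d → ℝ) → (Fin d → ℝ)) : Measure ((Fin d → ℝ) × (Fin d → ℝ)) :=
  (a • γ + b • π).map fun p => (a • p.1 + b • g p.1, p.2)

section Perturb

variable {d : ℕ} {a b : NNReal} {γ π : Measure ((Fin d → ℝ) × (Fin d → ℝ))}
  {g : (Fin d → ℝ) → (Fin d → ℝ)}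

lemma integral_perturb {F : Type*} [NormedAddCommGroup F] [NormedSpace ℝ F]
    (hg : Measurable g) {h : (Fin d → ℝ) × (Fin d → ℝ) → F} (hh : StronglyMeasurable h)
    (h1 : Integrable (fun p => h (a • p.1 + b • g p.1, p.2)) γ)
    (h2 : Integrable (fun p => h (a • p.1 + b • g p.1, p.2)) π)
    {A : Set (Fin d → ℝ)} (hA : MeasurableSet A) :
    ∫ p in Prod.fst ⁻¹' A, h p ∂(perturb a b γ π g) =
      (a : ℝ) • ∫ p in Prod.fst ⁻¹' ((fun x => a • x + b • g x) ⁻¹' A),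
          h (a • p.1 + b • g p.1, p.2) ∂γ +
        (b : ℝ) • ∫ p in Prod.fst ⁻¹' ((fun x => a • x + b • g x) ⁻¹' A),
          h (a • p.1 + b • g p.1, p.2) ∂π := by
  rw [perturb, setIntegral_map (measurable_fst hA) hh.aestronglyMeasurable (by fun_prop),
    Measure.restrict_add, Measure.restrict_smul, Measure.restrict_smul, integral_add_measure
      (h1.restrict.smul_measure_nnreal) (h2.restrict.smul_measure_nnreal),
    integral_smul_nnreal_measure, integral_smul_nnreal_measure]
  rfl

lemma memLp_label (hid : MemLp (fun x => x) 2 (γ.map Prod.fst))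
    (hgL : MemLp g 2 (γ.map Prod.fst)) :
    MemLp (fun x => a • x + b • g x) 2 (γ.map Prod.fst) :=
  (hid.const_smul (a : ℝ)).add (hgL.const_smul (b : ℝ))

lemma memLp_fst_comp {ρ : Measure ((Fin d → ℝ) × (Fin d → ℝ))}
    {f : (Fin d → ℝ) → (Fin d → ℝ)} (hf : MemLp f 2 (ρ.map Prod.fst)) :
    MemLp (fun p : (Fin d → ℝ) × (Fin d → ℝ) => f p.1) 2 ρ :=
  (memLp_map_measure_iff hf.1 measurable_fst.aemeasurable).1 hf

/-- The competitor is admissible. -/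
lemma perturb_MGamma [IsProbabilityMeasure γ] [IsProbabilityMeasure π] (hab : a + b = 1)
    {ν : Measure (Fin d → ℝ)} (hγν : γ.map Prod.snd = ν) (hπν : π.map Prod.snd = ν)
    (hμ : π.map Prod.fst = γ.map Prod.fst) (hγ : IsBary γ fun x => x) (hπ : IsBary π g)
    (hγ2 : MemLp (fun p => p.2) 2 γ) (hπ2 : MemLp (fun p => p.2) 2 π) :
    MGamma ν (perturb a b γ π g) := by
  have hg := hπ.1
  have hid := hγ.memLp hγ2
  have hgL := hμ ▸ hπ.memLp hπ2
  have hT := memLp_label (a := a) (b := b) hid hgL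
  have hTγ := memLp_fst_comp hT
  have hTπ := memLp_fst_comp (ρ := π) (hμ.symm ▸ hT)
  have hmeas : Measurable fun p : (Fin d → ℝ) × (Fin d → ℝ) =>
      (a • p.1 + b • g p.1, p.2) := by fun_prop
  have hint : ∀ {F : Type} [NormedAddCommGroup F] [NormedSpace ℝ F]
      (h : (Fin d → ℝ) × (Fin d → ℝ) → F), StronglyMeasurable h →
      Integrable (fun p => h (a • p.1 + b • g p.1, p.2)) γ →
      Integrable (fun p => h (a • p.1 + b • g p.1, p.2)) π →
      Integrable h (perturb a b γ π g) := by
    intro F _ _ h hh h1 h2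
    rw [perturb, integrable_map_measure hh.aestronglyMeasurable hmeas.aemeasurable]
    exact h1.smul_measure_nnreal.add_measure h2.smul_measure_nnreal
  have hab' : (a : ENNReal) + b = 1 := by exact_mod_cast hab
  have hprob : IsProbabilityMeasure (a • γ + b • π) := ⟨by
    rw [Measure.add_apply, Measure.smul_apply, Measure.smul_apply, measure_univ, measure_univ,
      ENNReal.smul_def, ENNReal.smul_def, smul_eq_mul, smul_eq_mul, mul_one, mul_one, hab']⟩
  have hprob' : IsProbabilityMeasure (perturb a b γ π g) :=
    Measure.isProbabilityMeasure_map hmeas.aemeasurable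
  refine ⟨hprob', ?_, ?_, ?_⟩
  · rw [perturb, Measure.map_map measurable_snd hmeas]
    change (a • γ + b • π).map Prod.snd = ν
    rw [Measure.map_add _ _ measurable_snd, Measure.map_smul, Measure.map_smul, hγν, hπν,
      ← add_smul, hab, one_smul]
  · refine hint _ (Measurable.stronglyMeasurable (by fun_prop)) ?_ ?_
    · exact (hTγ.integrable_norm_pow two_ne_zero).add (hγ2.integrable_norm_pow two_ne_zero)
    · exact (hTπ.integrable_norm_pow two_ne_zero).add (hπ2.integrable_norm_pow two_ne_zero)
  · have hTγ1 := hTγ.integrable one_le_two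
    have hTπ1 := hTπ.integrable one_le_two
    have hγ1 := hγ2.integrable one_le_two
    have hπ1 := hπ2.integrable one_le_two
    have hfst := hint (fun p => p.1) measurable_fst.stronglyMeasurable hTγ1 hTπ1
    have hsnd := hint (fun p => p.2) measurable_snd.stronglyMeasurable hγ1 hπ1
    refine (ae_eq_condExp_of_forall_setIntegral_eq measurable_fst.comap_le hsnd
      (fun _ _ _ => hfst.integrableOn) ?_
      (comap_measurable Prod.fst).stronglyMeasurable.aestronglyMeasurable).symm
    rintro _ ⟨A, hA, rfl⟩ -
    have hB : MeasurableSet ((fun x => a • x + b • g x) ⁻¹' A) :=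
      (by fun_prop : Measurable fun x => a • x + b • g x) hA
    rw [integral_perturb hg measurable_fst.stronglyMeasurable hTγ1 hTπ1 hA,
      integral_perturb hg measurable_snd.stronglyMeasurable hγ1 hπ1 hA]
    have eγ := setIntegral_map hB hT.1 (measurable_fst.aemeasurable (μ := γ))
    have eπ := setIntegral_map (μ := π) hB (hμ.symm ▸ hT.1) measurable_fst.aemeasurable
    dsimp only
    rw [hγ.setIntegral hγ2 hB, hπ.setIntegral hπ2 hB, ← eγ, ← eπ, hμ, ← add_smul]
    have hab'' : (a : ℝ) + b = 1 := by exact_mod_cast hab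
    rw [hab'', one_smul, integral_add (f := fun x => a • x) (g := fun x => b • g x)
      (((hid.integrable one_le_two).restrict).smul (a : ℝ))
      (((hgL.integrable one_le_two).restrict).smul (b : ℝ))]
    simp_rw [NNReal.smul_def]
    rw [integral_smul, integral_smul]

/-- The value of the competitor is quadratic in `(a, b)`. -/
lemma perturb_value [IsProbabilityMeasure γ] [IsProbabilityMeasure π]
    {S : Matrix (Fin d) (Fin d) ℝ} (hS : S.IsHermitian)
    (hμ : π.map Prod.fst = γ.map Prod.fst) (hγ : IsBary γ fun x => x) (hπ : IsBary π g)
    (hγ2 : MemLp (fun p => p.2) 2 γ) (hπ2 : MemLp (fun p => p.2) 2 π) :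
    ∫ p, Sb S p.1 p.2 ∂(perturb a b γ π g) =
      a ^ 2 * ∫ p, Sb S p.1 p.2 ∂γ + 2 * a * b * ∫ p, Sb S p.1 p.2 ∂π +
        b ^ 2 * ∫ x, Sb S (g x) (g x) ∂(γ.map Prod.fst) := by
  have hg := hπ.1
  have hid := hγ.memLp hγ2
  have hgL := hμ ▸ hπ.memLp hπ2
  have hT := memLp_label (a := a) (b := b) hid hgL
  have hTm : Measurable fun x => a • x + b • g x := by fun_prop
  have hTγ := memLp_fst_comp hT
  have hTπ := memLp_fst_comp (ρ := π) (hμ.symm ▸ hT)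
  have hbil : ∀ {α : Type} [MeasurableSpace α] {τ : Measure α} {f h : α → (Fin d → ℝ)},
      MemLp f 2 τ → MemLp h 2 τ → Integrable (fun x => Sb S (f x) (h x)) τ := by
    intro α _ τ f h hf hh
    simp_rw [← SbL_apply]
    exact memLp_one_iff_integrable.1 ((SbL S).memLp_of_bilin 1 hf hh)
  have hSm : StronglyMeasurable fun p : (Fin d → ℝ) × (Fin d → ℝ) => Sb S p.1 p.2 := by
    simp_rw [← SbL_apply]
    exact (SbL S).continuous₂.stronglyMeasurable
  have key := integral_perturb (a := a) (b := b) hg hSm (hbil hTγ hγ2) (hbil hTπ hπ2)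
    MeasurableSet.univ
  simp only [preimage_univ, Measure.restrict_univ, smul_eq_mul] at key
  have vγ := hγ.integral_Sb hγ2 S measurable_id hid
  have vπ := hπ.integral_Sb hπ2 S measurable_id (hμ.symm ▸ hid)
  simp only [id] at vγ vπ
  rw [key, hγ.integral_Sb hγ2 S hTm hT, hπ.integral_Sb hπ2 S hTm (hμ.symm ▸ hT),
    vγ, vπ, hμ]
  have e1 : ∀ x, Sb S (a • x + b • g x) x = a * Sb S x x + b * Sb S x (g x) := by
    intro x
    rw [Sb_comm hS x (g x)]
    simp [← SbL_apply, NNReal.smul_def]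
  have e2 : ∀ x, Sb S (a • x + b • g x) (g x) = a * Sb S x (g x) + b * Sb S (g x) (g x) := by
    intro x
    simp [← SbL_apply, NNReal.smul_def]
  have i1 := hbil hid hid
  have i2 := hbil hid hgL
  have i3 := hbil hgL hgL
  simp_rw [e1, e2]
  rw [integral_add (i1.const_mul _) (i2.const_mul _), integral_add (i2.const_mul _)
    (i3.const_mul _)]
  simp_rw [integral_const_mul]
  ring

end Perturb

/-- Theorem 4: an optimal plan `γ` for the primal problem, with
`x`-marginal `μ`, solves the unconstrained optimal transport problem of maximizing
`∫ S(x,y) dπ` over couplings `π ∈ Π(μ,ν)`. -/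
theorem optimal_plan_is_optimal_coupling
    (d m : ℕ) (S : Matrix (Fin d) (Fin d) ℝ) (hS : S.IsHermitian)
    (hrank : IsUnit S.det)
    (hm : Nat.card {i : Fin d // 0 < hS.eigenvalues i} = m)
    (ν : Measure (Fin d → ℝ)) [IsProbabilityMeasure ν]
    (hν : Integrable (fun y => ‖y‖ ^ 2) ν)
    (γ : Measure ((Fin d → ℝ) × (Fin d → ℝ))) (hγ : PrimalOpt S ν γ) :
    ∀ π : Measure ((Fin d → ℝ) × (Fin d → ℝ)), IsProbabilityMeasure π →
      π.map Prod.fst = γ.map Prod.fst → π.map Prod.snd = ν →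
        ∫ p, Sb S p.1 p.2 ∂π ≤ ∫ p, Sb S p.1 p.2 ∂γ := by
  intro π hπp hπ1 hπ2
  obtain ⟨⟨hγp, hγν, hγint, hmart⟩, hopt⟩ := hγ
  have hνL : MemLp (fun y => y) 2 ν :=
    (memLp_two_iff_integrable_sq_norm aestronglyMeasurable_id).2 hν
  have hL : ∀ ρ : Measure ((Fin d → ℝ) × (Fin d → ℝ)), ρ.map Prod.snd = ν →
      MemLp (fun p => p.2) 2 ρ := fun ρ h =>
    (memLp_map_measure_iff aestronglyMeasurable_id measurable_snd.aemeasurable).1 (h ▸ hνL)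
  have hγb : IsBary γ fun x => x := ⟨measurable_id, hmart⟩
  obtain ⟨g, hg⟩ := exists_isBary π
  set A := ∫ p, Sb S p.1 p.2 ∂γ
  set B := ∫ p, Sb S p.1 p.2 ∂π
  set C := ∫ x, Sb S (g x) (g x) ∂(γ.map Prod.fst)
  have key : ∀ b : ℝ, 0 < b → b < 1 →
      (1 - b) ^ 2 * A + 2 * (1 - b) * b * B + b ^ 2 * C ≤ A := by
    intro b hb0 hb1
    obtain ⟨a, ha⟩ : ∃ a : NNReal, (a : ℝ) = 1 - b := ⟨⟨1 - b, by linarith⟩, rfl⟩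
    obtain ⟨b', rfl⟩ : ∃ b' : NNReal, (b' : ℝ) = b := ⟨⟨b, hb0.le⟩, rfl⟩
    have hab : a + b' = 1 := NNReal.eq (by push_cast; linarith)
    have h := hopt _ (perturb_MGamma hab hγν hπ2 hπ1 hγb hg (hL γ hγν) (hL π hπ2))
    rw [primalVal, primalVal, perturb_value hS hπ1 hγb hg (hL γ hγν) (hL π hπ2)] at h
    rw [← ha]
    linarith
  -- Dividing by `b` leaves an affine inequality in `b`, to be read at `b → 0`.
  have key' : ∀ b : ℝ, 0 < b → b < 1 → 2 * (B - A) ≤ b * (2 * B - A - C) := by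
    intro b hb0 hb1
    have h := key b hb0 hb1
    refine le_of_mul_le_mul_left ?_ hb0
    linarith
  have hlim : Tendsto (fun b : ℝ => b * (2 * B - A - C)) (nhdsWithin 0 (Ioi 0)) (nhds 0) := by
    have : Tendsto (fun b : ℝ => b * (2 * B - A - C)) (nhds 0) (nhds (0 * (2 * B - A - C))) :=
      Continuous.tendsto (by fun_prop) 0
    rw [zero_mul] at this
    exact this.mono_left nhdsWithin_le_nhds
  have := ge_of_tendsto hlim (by
    filter_upwards [Ioo_mem_nhdsGT (zero_lt_one' ℝ)] with b hb using key' b hb.1 hb.2)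
  linarith

end
end

section
/- Let S be a real symmetric d×d matrix of full rank with exactly m positive eigenvalues and Σ a symmetric positive definite d×d matrix. Then there exist unique symmetric positive semi-definite d×d matrices Q and R such that Σ = Q + R, QSQ ≥ 0, RSR ≤ 0, and QSR = 0. Moreover, rank Q = m, rank R = d−m, QSQ − RSR > 0, QΣ^{-1}Q = Q, RΣ^{-1}R = R, and QΣ^{-1}R = 0. -/
open Matrix

/-!
Write `Σ = B * B` with `B` symmetric and invertible. Conjugation by `B` turns the problem into one
about `T = B * S * B` with `Σ` replaced by the identity: `Q = B * E * B` and `R = B * (1 - E) * B`,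
where `E` is the spectral projection of `T` onto its positive eigenspaces
(`IsPosProj.exists_of_isHermitian`). All the algebraic identities follow from `E * E = E` and
`E * T = T * E`, and `Q * S * Q - R * S * R = B * |T| * B` is positive definite.

Uniqueness: any other decomposition gives, after conjugation by `B⁻¹`, a symmetric `E'` with
`E' * T * (1 - E') = 0`; since `T` is invertible this forces `E'` to be a projection commuting with
`T` (`IsPosProj.of_mul_mul_eq_zero`). Then `T * E' - T * (1 - E')` is positive semidefinite with
square `T * T`, so uniqueness of positive square roots determines `E'` (`IsPosProj.unique`).

The ranks are `rank E` and `rank (1 - E)`. They are compared with the number of positive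
eigenvalues of `S` by Sylvester's law of inertia (`IsPosProj.rank_eq`).
-/

noncomputable section

/-- `E` is a spectral projection of the symmetric matrix `T` onto a subspace where `T ≥ 0`, with
`T ≤ 0` on the complement. For invertible `T` this is the projection onto the sum of the
eigenspaces of positive eigenvalues. -/
structure IsPosProj {d : ℕ} (T E : Matrix (Fin d) (Fin d) ℝ) : Prop where
  herm : E.IsHermitian
  idem : E * E = E
  comm : E * T = T * E
  pos : (T * E).PosSemidef
  neg : (-(T * (1 - E))).PosSemidef

namespace IsPosProj

variable {d : ℕ} {S T E F B : Matrix (Fin d) (Fin d) ℝ}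

lemma compl (h : IsPosProj T E) : IsPosProj (-T) (1 - E) where
  herm := Matrix.isHermitian_one.sub h.herm
  idem := by
    have := h.idem
    simp [mul_sub, sub_mul, this]
  comm := by
    have := h.comm
    simp only [mul_sub, sub_mul, mul_one, one_mul, mul_neg, neg_mul, this]
    abel
  pos := by simpa using h.neg
  neg := by simpa using h.pos

/-- `T E - T (1 - E)` is the absolute value of `T`. -/
lemma abs_sq (h : IsPosProj T E) :
    (T * E - T * (1 - E)) * (T * E - T * (1 - E)) = T * T := by
  have h1 : T * E * (T * E) = T * T * E := by
    rw [mul_assoc, ← mul_assoc E, h.comm, mul_assoc T, h.idem, ← mul_assoc]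
  have h2 : T * (T * E) = T * T * E := (mul_assoc _ _ _).symm
  have h3 : T * E * T = T * T * E := by rw [mul_assoc, h.comm, ← mul_assoc]
  simp only [mul_sub, sub_mul, mul_one, h1, h2, h3]
  abel

lemma abs_nonneg (h : IsPosProj T E) : (T * E - T * (1 - E)).PosSemidef := by
  simpa [sub_eq_add_neg] using h.pos.add h.neg

lemma abs_posDef (h : IsPosProj T E) (hT : IsUnit T.det) :
    (T * E - T * (1 - E)).PosDef := by
  rw [h.abs_nonneg.posDef_iff_det_ne_zero]
  intro h0
  have := congrArg Matrix.det h.abs_sq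
  simp only [det_mul, h0, zero_mul] at this
  exact hT.ne_zero (by simpa using this.symm)

open scoped MatrixOrder in
/-- Both projections give the positive square root of `T * T`, and `T` can be cancelled. -/
lemma unique (hE : IsPosProj T E) (hF : IsPosProj T F) (hT : IsUnit T.det) : E = F := by
  have h := (CFC.mul_self_eq_mul_self_iff _ _ hE.abs_nonneg.nonneg hF.abs_nonneg.nonneg).1
    (hE.abs_sq.trans hF.abs_sq.symm)
  have h2 : (2 : ℝ) • (T * E) = (2 : ℝ) • (T * F) := by
    simp only [mul_sub, mul_one] at h
    simp only [two_smul]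
    calc T * E + T * E = T * E - (T - T * E) + T := by abel
      _ = T * F - (T - T * F) + T := by rw [h]
      _ = _ := by abel
  have h3 : T * E = T * F := smul_right_injective _ (two_ne_zero' ℝ) h2
  have := congrArg (T⁻¹ * ·) h3
  simpa [← mul_assoc, nonsing_inv_mul _ hT] using this

lemma rank_add_rank (h : IsPosProj T E) : E.rank + (1 - E).rank = d := by
  apply le_antisymm
  · have := Matrix.rank_add_rank_le_card_of_mul_eq_zero (A := E) (B := 1 - E)
      (by simp [mul_sub, h.idem])
    simpa using this
  · have hle : LinearMap.range (1 : Matrix (Fin d) (Fin d) ℝ).mulVecLin ≤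
        LinearMap.range E.mulVecLin ⊔ LinearMap.range (1 - E).mulVecLin := by
      rintro _ ⟨x, rfl⟩
      have hx : (1 : Matrix (Fin d) (Fin d) ℝ).mulVecLin x
          = E.mulVecLin x + (1 - E).mulVecLin x := by simp
      rw [hx]
      exact Submodule.add_mem_sup ⟨x, rfl⟩ ⟨x, rfl⟩
    have h1 := (Submodule.finrank_mono hle).trans (Submodule.finrank_add_le_finrank_add_finrank _ _)
    have h2 : (1 : Matrix (Fin d) (Fin d) ℝ).rank = d := by simp
    exact h2.symm.le.trans h1

lemma exists_of_isHermitian (hT : T.IsHermitian) :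
    ∃ E, IsPosProj T E ∧ E.rank = Nat.card {i : Fin d // 0 < hT.eigenvalues i} := by
  classical
  set U : Matrix (Fin d) (Fin d) ℝ := (hT.eigenvectorUnitary : Matrix (Fin d) (Fin d) ℝ)
  have hUU : Uᴴ * U = 1 := Unitary.coe_star_mul_self hT.eigenvectorUnitary
  have hUU' : U * Uᴴ = 1 := Unitary.coe_mul_star_self hT.eigenvectorUnitary
  have hUX : ∀ X, Uᴴ * (U * X) = X := fun X => by rw [← mul_assoc, hUU, one_mul]
  set l := hT.eigenvalues
  have hTU : T = U * diagonal l * Uᴴ := by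
    have := hT.spectral_theorem
    rw [Unitary.conjStarAlgAut_apply] at this
    exact this
  let e : Fin d → ℝ := fun i => if 0 < l i then 1 else 0
  have h1 : 1 - U * diagonal e * Uᴴ = U * diagonal (1 - e) * Uᴴ := by
    have : diagonal (1 - e) = 1 - diagonal e := by
      ext i j; by_cases hij : i = j <;> simp [hij, one_apply]
    rw [this, mul_sub, sub_mul, mul_one, hUU']
  have hmul : ∀ a b : Fin d → ℝ, U * diagonal a * Uᴴ * (U * diagonal b * Uᴴ)
      = U * diagonal (fun i => a i * b i) * Uᴴ := fun a b => by
    rw [← diagonal_mul_diagonal]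
    simp only [mul_assoc, hUX]
  refine ⟨U * diagonal e * Uᴴ, ⟨?_, ?_, ?_, ?_, ?_⟩, ?_⟩
  · exact isHermitian_mul_mul_conjTranspose U (by simp [IsHermitian])
  · rw [hmul]
    congr 3
    ext i; simp [e]
  · rw [hTU, hmul, hmul]
    simp only [mul_comm]
  · rw [hTU, hmul]
    refine PosSemidef.mul_mul_conjTranspose_same (PosSemidef.diagonal fun i => ?_) U
    by_cases hi : 0 < l i
    · simpa [e, hi] using hi.le
    · simp [e, hi]
  · rw [h1, hTU, hmul, ← neg_mul, ← mul_neg, diagonal_neg]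
    refine PosSemidef.mul_mul_conjTranspose_same (PosSemidef.diagonal fun i => ?_) U
    by_cases hi : 0 < l i
    · simp [e, hi]
    · simpa [e, hi] using not_lt.1 hi
  · have hdet : IsUnit U.det := isUnit_det_of_left_inverse hUU
    have hdet' : IsUnit Uᴴ.det := isUnit_det_of_left_inverse hUU'
    rw [rank_mul_eq_left_of_isUnit_det _ _ hdet', rank_mul_eq_right_of_isUnit_det _ _ hdet,
      rank_diagonal, ← Nat.card_eq_fintype_card]
    apply Nat.card_congr (Equiv.subtypeEquivRight fun i => ?_)
    by_cases hi : 0 < l i <;> simp [e, hi]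

/-- One half of Sylvester's law of inertia: `F * B` is injective on the range of `E`, because the
quadratic form of `S` is positive on `B y` for nonzero `y` in that range and nonpositive on the
kernel of `F`. -/
lemma rank_le (hS : IsUnit S.det) (hB : B.IsHermitian) (hBu : IsUnit B.det)
    (hE : IsPosProj (B * S * B) E) (hF : IsPosProj S F) : E.rank ≤ F.rank := by
  have hTu : IsUnit (B * S * B).det := by
    simp only [det_mul]; exact (hBu.mul hS).mul hBu
  have key : LinearMap.ker (F * (B * E)).mulVecLin ≤ LinearMap.ker E.mulVecLin := by
    intro x hx
    simp only [LinearMap.mem_ker, mulVecLin_apply] at hx ⊢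
    by_contra hy
    have hp := (hE.abs_posDef hTu).dotProduct_mulVec_pos hy
    have hG : (B * S * B * E - B * S * B * (1 - E)) *ᵥ (E *ᵥ x) = (B * S * B) *ᵥ (E *ᵥ x) := by
      simp only [mulVec_mulVec]
      congr 1
      simp only [sub_mul, mul_sub, mul_one, mul_assoc, hE.idem, sub_self, sub_zero]
    rw [hG] at hp
    set y := E *ᵥ x with hydef
    have hz : F *ᵥ (B *ᵥ y) = 0 := by
      simpa [hydef, mulVec_mulVec, mul_assoc] using hx
    have hn := hF.neg.dotProduct_mulVec_nonneg (B *ᵥ y)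
    have hs : S *ᵥ ((1 - F) *ᵥ (B *ᵥ y)) = S *ᵥ (B *ᵥ y) := by
      rw [sub_mulVec, hz, one_mulVec, sub_zero]
    rw [neg_mulVec, ← mulVec_mulVec, hs, dotProduct_neg] at hn
    have hBt : Bᵀ = B := by simpa [IsHermitian, conjTranspose_eq_transpose_of_trivial] using hB
    have : star y ⬝ᵥ (B * S * B) *ᵥ y = star (B *ᵥ y) ⬝ᵥ S *ᵥ (B *ᵥ y) := by
      simp only [star_trivial]
      rw [← mulVec_mulVec, ← mulVec_mulVec, dotProduct_mulVec y B, ← mulVec_transpose, hBt]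
    linarith
  have h1 := LinearMap.finrank_range_add_finrank_ker E.mulVecLin
  have h2 := LinearMap.finrank_range_add_finrank_ker (F * (B * E)).mulVecLin
  have h3 := Submodule.finrank_mono key
  have h4 := rank_mul_le_left F (B * E)
  simp only [Matrix.rank] at *
  omega

/-- **Sylvester's law of inertia** for a congruence by a symmetric invertible matrix. -/
lemma rank_eq (hS : IsUnit S.det) (hB : B.IsHermitian) (hBu : IsUnit B.det)
    (hE : IsPosProj (B * S * B) E) (hF : IsPosProj S F) : E.rank = F.rank := by
  have h1 := rank_le hS hB hBu hE hF
  have h2 : (1 - E).rank ≤ (1 - F).rank := by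
    refine rank_le (S := -S) (B := B) ?_ hB hBu ?_ hF.compl
    · exact (isUnit_iff_isUnit_det _).1 ((isUnit_iff_isUnit_det _).2 hS).neg
    · simpa using hE.compl
  have h3 := hE.rank_add_rank
  have h4 := hF.rank_add_rank
  omega

/-- From `E T (1 - E) = 0` and its transpose, `E T = E T E = T E`; cancelling `T` in
`E T = E E T` shows that `E` is a projection. -/
lemma of_mul_mul_eq_zero (hT : T.IsHermitian) (hTu : IsUnit T.det) (hE : E.IsHermitian)
    (h0 : E * T * (1 - E) = 0) (hp : (E * T * E).PosSemidef)
    (hn : (-((1 - E) * T * (1 - E))).PosSemidef) : IsPosProj T E := by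
  have h1 : E * T = E * T * E := by
    rw [mul_sub, mul_one, sub_eq_zero] at h0; exact h0
  have h2 : T * E = E * T * E := by
    have := congrArg conjTranspose h1
    simpa only [conjTranspose_mul, hE.eq, hT.eq, mul_assoc] using this
  have hc : E * T = T * E := h1.trans h2.symm
  have hi : E * E = E := by
    have h3 : T * (E * E) = T * E := by rw [← mul_assoc, ← hc, ← h1, hc]
    have := congrArg (T⁻¹ * ·) h3
    simpa [← mul_assoc, nonsing_inv_mul _ hTu] using this
  refine ⟨hE, hi, hc, h2 ▸ hp, ?_⟩
  have h4 : (1 - E) * T * (1 - E) = T * (1 - E) := by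
    rw [sub_mul 1 E T, sub_mul, h0, sub_zero, one_mul]
  rwa [h4] at hn

end IsPosProj

open scoped MatrixOrder in
lemma exists_hermitian_sqrt {d : ℕ} {Sig : Matrix (Fin d) (Fin d) ℝ} (h : Sig.PosDef) :
    ∃ B : Matrix (Fin d) (Fin d) ℝ, B.IsHermitian ∧ IsUnit B.det ∧ B * B = Sig := by
  have hB : CFC.sqrt Sig * CFC.sqrt Sig = Sig :=
    CFC.sqrt_mul_sqrt_self Sig h.posSemidef.nonneg
  refine ⟨CFC.sqrt Sig, (CFC.sqrt_nonneg Sig).posSemidef.isHermitian, ?_, hB⟩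
  have := (isUnit_iff_isUnit_det _).1 h.isUnit
  rw [← hB, det_mul] at this
  exact isUnit_of_mul_isUnit_left this

/-- Theorem 6: for a real symmetric `d × d` matrix `S` of full rank
with exactly `m` positive eigenvalues and a symmetric positive definite matrix `Σ`,
there exist unique symmetric positive semi-definite matrices `Q`, `R` with
`Σ = Q + R`, `QSQ ≥ 0`, `RSR ≤ 0`, `QSR = 0`; moreover `rank Q = m`, `rank R = d - m`,
`QSQ - RSR > 0`, `QΣ⁻¹Q = Q`, `RΣ⁻¹R = R` and `QΣ⁻¹R = 0`. -/
theorem matrix_decomposition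
    (d m : ℕ) (S : Matrix (Fin d) (Fin d) ℝ) (hS : S.IsHermitian)
    (hrank : IsUnit S.det)
    (hm : Nat.card {i : Fin d // 0 < hS.eigenvalues i} = m)
    (Sig : Matrix (Fin d) (Fin d) ℝ) (hSig : Sig.PosDef) :
    ∃ Q R : Matrix (Fin d) (Fin d) ℝ,
      (Q.PosSemidef ∧ R.PosSemidef ∧ Sig = Q + R ∧
        (Q * S * Q).PosSemidef ∧ (-(R * S * R)).PosSemidef ∧ Q * S * R = 0) ∧
      (∀ Q' R' : Matrix (Fin d) (Fin d) ℝ,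
        Q'.PosSemidef → R'.PosSemidef → Sig = Q' + R' →
          (Q' * S * Q').PosSemidef → (-(R' * S * R')).PosSemidef → Q' * S * R' = 0 →
            Q' = Q ∧ R' = R) ∧
      Q.rank = m ∧ R.rank = d - m ∧ (Q * S * Q - R * S * R).PosDef ∧
      Q * Sig⁻¹ * Q = Q ∧ R * Sig⁻¹ * R = R ∧ Q * Sig⁻¹ * R = 0 := by
  obtain ⟨B, hB, hBu, rfl⟩ := exists_hermitian_sqrt hSig
  have hC : B⁻¹.IsHermitian := hB.inv
  have hBC : B * B⁻¹ = 1 := mul_nonsing_inv _ hBu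
  have hCB : B⁻¹ * B = 1 := nonsing_inv_mul _ hBu
  have hBCX : ∀ X, B * (B⁻¹ * X) = X := fun X => by rw [← mul_assoc, hBC, one_mul]
  have hCBX : ∀ X, B⁻¹ * (B * X) = X := fun X => by rw [← mul_assoc, hCB, one_mul]
  have conjB : ∀ {X : Matrix (Fin d) (Fin d) ℝ}, X.PosSemidef → (B * X * B).PosSemidef :=
    fun hX => by simpa only [hB.eq] using hX.mul_mul_conjTranspose_same B
  have conjC : ∀ {X : Matrix (Fin d) (Fin d) ℝ}, X.PosSemidef → (B⁻¹ * X * B⁻¹).PosSemidef :=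
    fun hX => by simpa only [hC.eq] using hX.mul_mul_conjTranspose_same B⁻¹
  have hT : (B * S * B).IsHermitian := by
    simpa only [hB.eq] using isHermitian_mul_mul_conjTranspose B hS
  have hTu : IsUnit (B * S * B).det := by
    simp only [det_mul]; exact (hBu.mul hrank).mul hBu
  obtain ⟨E, hE, -⟩ := IsPosProj.exists_of_isHermitian hT
  obtain ⟨F, hF, hFr⟩ := IsPosProj.exists_of_isHermitian hS
  have hEr : E.rank = m := (IsPosProj.rank_eq hrank hB hBu hE hF).trans (hFr.trans hm)
  have hEr' : (1 - E).rank = d - m := by have := hE.rank_add_rank; omega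
  have hE' := hE.compl
  -- A symmetric idempotent is positive semidefinite, being `Gᴴ G`.
  have psd : ∀ {G : Matrix (Fin d) (Fin d) ℝ}, G.IsHermitian → G * G = G → G.PosSemidef :=
    fun {G} h1 h2 => by
      have := posSemidef_conjTranspose_mul_self G
      rwa [h1.eq, h2] at this
  have hrk : ∀ X : Matrix (Fin d) (Fin d) ℝ, (B * X * B).rank = X.rank := fun X => by
    rw [rank_mul_eq_left_of_isUnit_det _ _ hBu, rank_mul_eq_right_of_isUnit_det _ _ hBu]
  have hcongr : ∀ X Y : Matrix (Fin d) (Fin d) ℝ,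
      B * X * B * S * (B * Y * B) = B * (X * (B * S * B) * Y) * B := fun X Y => by
    simp only [mul_assoc]
  have hQSQ : B * E * B * S * (B * E * B) = B * (B * S * B * E) * B := by
    rw [hcongr, hE.comm, mul_assoc (B * S * B), hE.idem]
  have hcomm' : (1 - E) * (B * S * B) = B * S * B * (1 - E) := by
    rw [sub_mul, mul_sub, hE.comm, one_mul, mul_one]
  have hRSR : B * (1 - E) * B * S * (B * (1 - E) * B) = B * (B * S * B * (1 - E)) * B := by
    rw [hcongr, hcomm', mul_assoc (B * S * B), hE'.idem]
  have h0 : E * (1 - E) = 0 := by rw [mul_sub, mul_one, hE.idem, sub_self]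
  have hinv : ∀ X Y : Matrix (Fin d) (Fin d) ℝ,
      B * X * B * (B * B)⁻¹ * (B * Y * B) = B * (X * Y) * B := fun X Y => by
    rw [Matrix.mul_inv_rev]
    simp only [mul_assoc, hBCX, hCBX]
  refine ⟨B * E * B, B * (1 - E) * B,
    ⟨conjB (psd hE.herm hE.idem), conjB (psd hE'.herm hE'.idem), ?_, ?_, ?_, ?_⟩, ?_,
    (hrk _).trans hEr, (hrk _).trans hEr', ?_, ?_, ?_, ?_⟩
  · rw [← add_mul, ← mul_add, add_sub_cancel, mul_one]
  · rw [hQSQ]; exact conjB hE.pos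
  · rw [hRSR, ← neg_mul, ← mul_neg]; exact conjB hE.neg
  · rw [hcongr, hE.comm, mul_assoc (B * S * B), h0]; simp
  · intro Q R hQ hR hsum hp hn hz
    have hR' : R = B * B - Q := by rw [hsum, add_sub_cancel_left]
    have hr : 1 - B⁻¹ * Q * B⁻¹ = B⁻¹ * R * B⁻¹ := by
      rw [hR', mul_sub, sub_mul, hCBX, hBC]
    have hconj : ∀ X Y : Matrix (Fin d) (Fin d) ℝ,
        B⁻¹ * X * B⁻¹ * (B * S * B) * (B⁻¹ * Y * B⁻¹) = B⁻¹ * (X * S * Y) * B⁻¹ := fun X Y => by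
      simp only [mul_assoc, hBCX, hCBX]
    have hq : IsPosProj (B * S * B) (B⁻¹ * Q * B⁻¹) := by
      refine .of_mul_mul_eq_zero hT hTu (conjC hQ).isHermitian ?_ ?_ ?_
      · rw [hr, hconj, hz]; simp
      · rw [hconj]; exact conjC hp
      · rw [hr, hconj, ← neg_mul, ← mul_neg]; exact conjC hn
    have hEq : E = B⁻¹ * Q * B⁻¹ := hE.unique hq hTu
    have hQE : Q = B * E * B := by
      rw [hEq]; simp only [mul_assoc, hBCX, hCB, mul_one]
    refine ⟨hQE, ?_⟩
    rw [hR', hQE, mul_sub, sub_mul, mul_one]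
  · rw [hQSQ, hRSR, ← sub_mul, ← mul_sub]
    have := (IsUnit.posDef_star_left_conjugate_iff ((isUnit_iff_isUnit_det _).2 hBu)).2
      (hE.abs_posDef hTu)
    rwa [star_eq_conjTranspose, hB.eq] at this
  · rw [hinv, hE.idem]
  · rw [hinv, hE'.idem]
  · rw [hinv, h0]; simp

end
end

section
/- Let S be a real symmetric d×d matrix of full rank with exactly m positive eigenvalues, Σ a symmetric positive definite d×d matrix, and Q, R the unique symmetric positive semi-definite matrices with Σ = Q + R, QSQ ≥ 0, RSR ≤ 0, QSR = 0. Then P := QΣ^{-1} is the unique idempotent d×d matrix (P² = P) such that PΣ and SP are symmetric, PΣ ≥ 0, (I−P)Σ ≥ 0, SP ≥ 0 and S(I−P) ≤ 0. Moreover S(2P−I) = SP − S(I−P) > 0. -/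
/-!
The vanishing of the cross term `Q * S * R` makes the ranges of `Q` and `R` complementary, in the
form `Q * Sig⁻¹ * R = 0` (`mul_inv_mul_eq_zero`). Hence `P = Q * Sig⁻¹` is idempotent with
complement `1 - P = R * Sig⁻¹`, and `S * P`, `S * (1 - P)` are the congruences of `Q * S * Q` and
`R * S * R` by `Sig⁻¹`, from which their symmetry and signs are read off.

For uniqueness, put `T = S * (2 • P - 1)` for any `P` as in the theorem. Since `2 • P - 1` is an
involution which is symmetric with respect to both `S` and `Sig`, one gets
`T * Sig * T = S * Sig * S` (`reflection_sandwich`), whose right-hand side does not depend on `P`.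
As `T` is positive semidefinite, uniqueness of positive square roots, applied after conjugation by
`Sig ^ (1/2)`, determines `T` (`eq_of_mul_mul_self_eq`), and then `P`, because `S` is invertible.
-/


open Matrix

noncomputable section

open scoped MatrixOrder Matrix.Norms.L2Operator in
/-- For positive definite `Sig`, a positive semidefinite solution `T` of `T * Sig * T = B` is unique:
with `C` the square root of `Sig`, the matrix `C * T * C` is the positive square root of
`C * B * C`. -/
theorem eq_of_mul_mul_self_eq {d : ℕ} {Sig T U : Matrix (Fin d) (Fin d) ℝ} (hSig : Sig.PosDef)
    (hT : T.PosSemidef) (hU : U.PosSemidef) (h : T * Sig * T = U * Sig * U) : T = U := by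
  have hC : (CFC.sqrt Sig) * (CFC.sqrt Sig) = Sig :=
    CFC.sqrt_mul_sqrt_self Sig hSig.posSemidef.nonneg
  have hCp : (CFC.sqrt Sig).PosSemidef := (CFC.sqrt_nonneg Sig).posSemidef
  generalize CFC.sqrt Sig = C at hC hCp
  have hCu : IsUnit C := by
    have h1 : IsUnit (C * C) := hC ▸ hSig.isUnit
    rw [isUnit_iff_isUnit_det] at h1 ⊢
    rw [det_mul] at h1
    exact isUnit_of_mul_isUnit_left h1
  have key : ∀ X : Matrix (Fin d) (Fin d) ℝ, X.PosSemidef → 0 ≤ C * X * C := fun X hX => by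
    have := hX.mul_mul_conjTranspose_same C
    rw [hCp.isHermitian.eq] at this
    exact this.nonneg
  have h2 : C * T * C = C * U * C := by
    rw [← CFC.mul_self_eq_mul_self_iff _ _ (key T hT) (key U hU)]
    calc C * T * C * (C * T * C) = C * (T * (C * C) * T) * C := by noncomm_ring
      _ = C * (U * (C * C) * U) * C := by rw [hC, h]
      _ = C * U * C * (C * U * C) := by noncomm_ring
  exact hCu.mul_left_cancel (hCu.mul_right_cancel h2)

/-- The ranges of `Q` and `R` meet only in `0`. Indeed `X = Q * Sig⁻¹ * R = Q - Q * Sig⁻¹ * Q` is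
symmetric, hence also equal to `R * Sig⁻¹ * Q`, so that `X * S` annihilates both `Q` and `R`, and
therefore `Sig = Q + R`. -/
theorem mul_inv_mul_eq_zero {d : ℕ} {S Sig Q R : Matrix (Fin d) (Fin d) ℝ} (hS : S.IsHermitian)
    (hSu : IsUnit S) (hSig : Sig.PosDef) (hQ : Q.IsHermitian) (hR : R.IsHermitian)
    (hQR : Sig = Q + R) (hQSR : Q * S * R = 0) : Q * Sig⁻¹ * R = 0 := by
  have hdet := (isUnit_iff_isUnit_det _).1 hSig.isUnit
  have hRSQ : R * S * Q = 0 := by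
    simpa [-conjTranspose_eq_transpose_of_trivial, conjTranspose_mul, hS.eq, hQ.eq, hR.eq, mul_assoc] using
      congrArg conjTranspose hQSR
  have hR' : R = Sig - Q := by rw [hQR]; abel
  have hcomm : Q * Sig⁻¹ * R = R * Sig⁻¹ * Q := by
    rw [hR', mul_sub, sub_mul, sub_mul, nonsing_inv_mul_cancel_right _ _ hdet,
      mul_nonsing_inv _ hdet, one_mul]
  have h0 : Q * Sig⁻¹ * R * (S * Sig) = 0 := by
    calc Q * Sig⁻¹ * R * (S * Sig)
        = Q * Sig⁻¹ * R * S * Q + Q * Sig⁻¹ * R * S * R := by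
          rw [← mul_assoc, ← mul_add, ← hQR]
      _ = Q * Sig⁻¹ * (R * S * Q) + R * Sig⁻¹ * (Q * S * R) := by
          nth_rewrite 2 [hcomm]; simp only [mul_assoc]
      _ = 0 := by rw [hRSQ, hQSR]; simp
  exact (hSu.mul hSig.isUnit).mul_left_eq_zero.1 h0

/-- With `J = 2 • P - 1`, symmetry of `S * P` and `P * Sig` gives `S * J = Jᴴ * S` and
`J * Sig = Sig * Jᴴ`, whence `S * J * Sig * (S * J) = S * Sig * Jᴴ * Jᴴ * S`, and `J * J = 1`. -/
theorem reflection_sandwich {d : ℕ} {S Sig P : Matrix (Fin d) (Fin d) ℝ} (hS : S.IsHermitian)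
    (hSig : Sig.IsHermitian) (hP : P * P = P) (hPSig : (P * Sig).IsHermitian)
    (hSP : (S * P).IsHermitian) :
    S * (2 • P - 1) * Sig * (S * (2 • P - 1)) = S * Sig * S := by
  have h1 : Sig * Pᴴ = P * Sig := by
    simpa [-conjTranspose_eq_transpose_of_trivial, IsHermitian, conjTranspose_mul, hSig.eq] using hPSig
  have h2 : Pᴴ * S = S * P := by
    simpa [-conjTranspose_eq_transpose_of_trivial, IsHermitian, conjTranspose_mul, hS.eq] using hSP
  have h3 : P * Sig * S = Sig * S * P := by rw [← h1, mul_assoc, h2, mul_assoc]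
  calc S * (2 • P - 1) * Sig * (S * (2 • P - 1))
      = S * (2 • (P * Sig * S) - Sig * S) * (2 • P - 1) := by noncomm_ring
    _ = S * (Sig * S) * (4 • (P * P) - 4 • P + 1) := by rw [h3]; noncomm_ring
    _ = S * Sig * S := by rw [hP]; noncomm_ring

/-- Theorem 7: with `Q`, `R` the unique symmetric positive
semi-definite matrices from Theorem 6, `P := QΣ⁻¹` is the unique idempotent matrix such
that `PΣ` and `SP` are symmetric, `PΣ ≥ 0`, `(I-P)Σ ≥ 0`, `SP ≥ 0` and `S(I-P) ≤ 0`;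
moreover `S(2P - I) = SP - S(I-P) > 0`. -/
theorem projection_matrix_characterization
    (d m : ℕ) (S : Matrix (Fin d) (Fin d) ℝ) (hS : S.IsHermitian)
    (hrank : IsUnit S.det)
    (hm : Nat.card {i : Fin d // 0 < hS.eigenvalues i} = m)
    (Sig : Matrix (Fin d) (Fin d) ℝ) (hSig : Sig.PosDef)
    (Q R : Matrix (Fin d) (Fin d) ℝ)
    (hQ : Q.PosSemidef) (hR : R.PosSemidef) (hQR : Sig = Q + R)
    (hQSQ : (Q * S * Q).PosSemidef) (hRSR : (-(R * S * R)).PosSemidef)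
    (hQSR : Q * S * R = 0) :
    (Q * Sig⁻¹) * (Q * Sig⁻¹) = Q * Sig⁻¹ ∧
    ((Q * Sig⁻¹) * Sig).IsHermitian ∧ (S * (Q * Sig⁻¹)).IsHermitian ∧
    ((Q * Sig⁻¹) * Sig).PosSemidef ∧ ((1 - Q * Sig⁻¹) * Sig).PosSemidef ∧
    (S * (Q * Sig⁻¹)).PosSemidef ∧ (-(S * (1 - Q * Sig⁻¹))).PosSemidef ∧
    (∀ P : Matrix (Fin d) (Fin d) ℝ, P * P = P →
      (P * Sig).IsHermitian → (S * P).IsHermitian →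
      (P * Sig).PosSemidef → ((1 - P) * Sig).PosSemidef →
      (S * P).PosSemidef → (-(S * (1 - P))).PosSemidef → P = Q * Sig⁻¹) ∧
    S * (2 • (Q * Sig⁻¹) - 1) = S * (Q * Sig⁻¹) - S * (1 - Q * Sig⁻¹) ∧
    (S * (2 • (Q * Sig⁻¹) - 1)).PosDef := by
  have hSu : IsUnit S := (isUnit_iff_isUnit_det _).2 hrank
  have hdet := (isUnit_iff_isUnit_det _).1 hSig.isUnit
  have hX := mul_inv_mul_eq_zero hS hSu hSig hQ.isHermitian hR.isHermitian hQR hQSR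
  have hRSQ : R * S * Q = 0 := by
    simpa [-conjTranspose_eq_transpose_of_trivial, conjTranspose_mul, hS.eq, hQ.isHermitian.eq,
      hR.isHermitian.eq, mul_assoc] using
      congrArg conjTranspose hQSR
  have hI : (Sig⁻¹)ᴴ = Sig⁻¹ := hSig.isHermitian.inv.eq
  have hcompl : 1 - Q * Sig⁻¹ = R * Sig⁻¹ := by
    rw [sub_eq_iff_eq_add', ← add_mul, ← hQR, mul_nonsing_inv _ hdet]
  have hPS : Q * Sig⁻¹ * Sig = Q := nonsing_inv_mul_cancel_right _ _ hdet
  have hRS : R * Sig⁻¹ * Sig = R := nonsing_inv_mul_cancel_right _ _ hdet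
  have hidem : (Q * Sig⁻¹) * (Q * Sig⁻¹) = Q * Sig⁻¹ := by
    have h : Q * Sig⁻¹ * (1 - Q * Sig⁻¹) = 0 := by
      rw [hcompl, ← mul_assoc, hX, zero_mul]
    rw [mul_sub, mul_one, sub_eq_zero] at h
    exact h.symm
  -- Expanding `S = Sig⁻¹ * (Q + R) * S`, the cross terms vanish.
  have hSeq : S = Sig⁻¹ * (Q + R) * S := by
    rw [← hQR, nonsing_inv_mul _ hdet, one_mul]
  have hSP : S * (Q * Sig⁻¹) = Sig⁻¹ * (Q * S * Q) * Sig⁻¹ := by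
    calc S * (Q * Sig⁻¹) = Sig⁻¹ * (Q + R) * S * (Q * Sig⁻¹) := by rw [← hSeq]
      _ = Sig⁻¹ * (Q * S * Q) * Sig⁻¹ + Sig⁻¹ * (R * S * Q) * Sig⁻¹ := by noncomm_ring
      _ = _ := by rw [hRSQ]; simp
  have hSR : -(S * (R * Sig⁻¹)) = Sig⁻¹ * (-(R * S * R)) * Sig⁻¹ := by
    calc -(S * (R * Sig⁻¹)) = -(Sig⁻¹ * (Q + R) * S * (R * Sig⁻¹)) := by rw [← hSeq]
      _ = Sig⁻¹ * (-(R * S * R)) * Sig⁻¹ - Sig⁻¹ * (Q * S * R) * Sig⁻¹ := by noncomm_ring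
      _ = _ := by rw [hQSR]; simp
  have hSPp : (S * (Q * Sig⁻¹)).PosSemidef := by
    have := hQSQ.mul_mul_conjTranspose_same Sig⁻¹
    rwa [hI, ← hSP] at this
  have hSRp : (-(S * (1 - Q * Sig⁻¹))).PosSemidef := by
    have := hRSR.mul_mul_conjTranspose_same Sig⁻¹
    rwa [hI, ← hSR, ← hcompl] at this
  have hsplit : ∀ P : Matrix (Fin d) (Fin d) ℝ,
      S * (2 • P - 1) = S * P - S * (1 - P) := fun P => by noncomm_ring
  have hTp : ∀ P : Matrix (Fin d) (Fin d) ℝ, (S * P).PosSemidef →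
      (-(S * (1 - P))).PosSemidef → (S * (2 • P - 1)).PosSemidef := fun P h1 h2 => by
    rw [hsplit, sub_eq_add_neg]; exact h1.add h2
  have hPSh : ((Q * Sig⁻¹) * Sig).IsHermitian := by rw [hPS]; exact hQ.isHermitian
  refine ⟨hidem, hPSh, hSPp.isHermitian, by rwa [hPS], by rwa [hcompl, hRS], hSPp, hSRp, ?_,
    hsplit _, ?_⟩
  · intro P hP hPSig hSPh _ _ hSPq hSRq
    have hT : S * (2 • P - 1) = S * (2 • (Q * Sig⁻¹) - 1) :=
      eq_of_mul_mul_self_eq hSig (hTp P hSPq hSRq) (hTp _ hSPp hSRp) <| by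
        rw [reflection_sandwich hS hSig.isHermitian hP hPSig hSPh,
          reflection_sandwich hS hSig.isHermitian hidem hPSh hSPp.isHermitian]
    have hJ := sub_left_injective (hSu.mul_left_cancel hT)
    ext i j
    simpa using congrFun (congrFun hJ i) j
  -- `2 • P - 1` is an involution, so `S * (2 • P - 1)` is invertible.
  · have hJ : (2 • (Q * Sig⁻¹) - 1) * (2 • (Q * Sig⁻¹) - 1) = 1 := by
      calc (2 • (Q * Sig⁻¹) - 1) * (2 • (Q * Sig⁻¹) - 1)
          = 4 • ((Q * Sig⁻¹) * (Q * Sig⁻¹)) - 4 • (Q * Sig⁻¹) + 1 := by noncomm_ring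
        _ = 1 := by rw [hidem]; simp
    exact (hTp _ hSPp hSRp).posDef_iff_isUnit.2 (hSu.mul (IsUnit.of_mul_eq_one _ hJ))

end
end

section
/- Let S be a real symmetric d×d matrix of full rank with exactly m positive eigenvalues. For a set G ⊆ ℝ^d, the following are equivalent: (a) G is an affine subspace of ℝ^d, G is maximal S-monotone, and S(x−y,x−y) > 0 for all distinct x,y ∈ G; (b) G = {x₀ + P(x−x₀) : x ∈ ℝ^d} for some x₀ ∈ ℝ^d and some idempotent d×d matrix P such that SP is symmetric, SP ≥ 0, S(I−P) ≤ 0, and S(2P−I) > 0. In this case, the S-projection on G is single-valued and given by P_G(y) = x₀ + P(y−x₀) for all y ∈ ℝ^d. -/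
/-!
The quadratic form is written `q(x) = S(x,x)`.

Given an idempotent `P` satisfying the matrix conditions, `SP` symmetric means that
`P` is self-adjoint for the form `S`, so the kernel of `P` is `S`-orthogonal to its range `V`. Evaluating `S(2P-I) > 0` on the two spaces
shows that `q > 0` on `V \ {0}` and `q < 0` on `ker P \ {0}`. Positivity on `V` is strict
monotonicity of `G = x₀ + V`. Negativity on `ker P` is maximality: if `y` can be added to `G`, then
`(I-P)(y-x₀)` is the difference of `y` and a point of `G` and lies in `ker P`, so it vanishes.
For `z ∈ G` and `x = x₀ + P(y-x₀)` the Pythagorean identity `q(z-y) = q(z-x) + q(x-y)` identifies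
the projection.

Conversely, an affine maximal strictly monotone set is nonempty, hence `G = x₀ + V` with `V` a
subspace on which `q` is positive definite. Then `V` meets its `S`-orthogonal complement trivially, so the two are
complementary, and `P` is taken to be the projection on `V` along this complement
(`exists_Sb_orthogonal_projection`). A vector `w` of the complement with `q(w) ≥ 0` satisfies
`q(v-w) = q(v) + q(w) ≥ 0` for `v ∈ V`, so `x₀ + w` can be added to `G`; maximality gives `w ∈ V`,
so `w = 0`. Hence `q` is negative definite on the complement, which gives all the sign conditions.
-/

open MeasureTheory Filter Set Matrix

noncomputable section

/-! ### The bilinear form and self-adjointness of matrices -/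

lemma Sb_add_left {d : ℕ} (S : Matrix (Fin d) (Fin d) ℝ) (x y z : Fin d → ℝ) :
    Sb S (x + y) z = Sb S x z + Sb S y z := by
  simp [Sb, add_dotProduct]

lemma Sb_add_right {d : ℕ} (S : Matrix (Fin d) (Fin d) ℝ) (x y z : Fin d → ℝ) :
    Sb S x (y + z) = Sb S x y + Sb S x z := by
  simp [Sb, mulVec_add, dotProduct_add]

lemma Sb_neg_neg {d : ℕ} (S : Matrix (Fin d) (Fin d) ℝ) (x y : Fin d → ℝ) :
    Sb S (-x) (-y) = Sb S x y := by
  simp [Sb, mulVec_neg]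

lemma Sb_add_self_of_orthogonal {d : ℕ} {S : Matrix (Fin d) (Fin d) ℝ} (hS : S.IsHermitian)
    {x y : Fin d → ℝ} (h : Sb S x y = 0) :
    Sb S (x + y) (x + y) = Sb S x x + Sb S y y := by
  rw [Sb_add_left, Sb_add_right, Sb_add_right, Sb_comm hS y x, h]
  ring

lemma isHermitian_of_Sb_comm {d : ℕ} {A : Matrix (Fin d) (Fin d) ℝ}
    (h : ∀ x y, Sb A x y = Sb A y x) : A.IsHermitian := by
  ext i j
  simpa [Sb] using h (Pi.single j 1) (Pi.single i 1)

lemma Sb_mul {d : ℕ} (S P : Matrix (Fin d) (Fin d) ℝ) (x y : Fin d → ℝ) :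
    Sb (S * P) x y = Sb S x (P *ᵥ y) := by
  simp [Sb, mulVec_mulVec]

lemma isHermitian_mul_iff {d : ℕ} {S P : Matrix (Fin d) (Fin d) ℝ} (hS : S.IsHermitian) :
    (S * P).IsHermitian ↔ ∀ x y, Sb S (P *ᵥ x) y = Sb S x (P *ᵥ y) := by
  constructor
  · intro h x y
    rw [Sb_comm hS, ← Sb_mul, Sb_comm h, Sb_mul]
  · intro h
    refine isHermitian_of_Sb_comm fun x y => ?_
    rw [Sb_mul, Sb_mul, ← h, Sb_comm hS]

lemma Sb_two_smul_sub_one {d : ℕ} (S P : Matrix (Fin d) (Fin d) ℝ) (x : Fin d → ℝ) :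
    Sb (S * (2 • P - 1)) x x = 2 * Sb S x (P *ᵥ x) - Sb S x x := by
  rw [Sb_mul, sub_mulVec, one_mulVec]
  simp [Sb, mulVec_sub, dotProduct_sub, two_smul, add_mulVec, mulVec_add, dotProduct_add]
  ring

/-! ### The affine space attached to an idempotent matrix -/

/-- A point lies on the affine space `x₀ + range P` exactly when its difference with `x₀` is fixed
by the idempotent `P`. -/
lemma mem_affine_iff {d : ℕ} {P : Matrix (Fin d) (Fin d) ℝ} (hP : P * P = P)
    (x₀ z : Fin d → ℝ) :
    z ∈ {z | ∃ x : Fin d → ℝ, z = x₀ + P.mulVec (x - x₀)} ↔ P *ᵥ (z - x₀) = z - x₀ := by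
  constructor
  · rintro ⟨x, rfl⟩
    simp [hP]
  · intro h
    exact ⟨z, by rw [h]; simp⟩

/-- The form is positive definite on the range of `P`. -/
lemma Sb_pos_of_fixed {d : ℕ} {S P : Matrix (Fin d) (Fin d) ℝ}
    (h : (S * (2 • P - 1)).PosDef) {v : Fin d → ℝ} (hv : P *ᵥ v = v) (h0 : v ≠ 0) :
    0 < Sb S v v := by
  have h1 : 0 < Sb (S * (2 • P - 1)) v v := by simpa [Sb] using h.dotProduct_mulVec_pos h0
  rw [Sb_two_smul_sub_one, hv] at h1
  linarith

/-- The form is negative definite on the kernel of `P`. -/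
lemma Sb_neg_of_ker {d : ℕ} {S P : Matrix (Fin d) (Fin d) ℝ}
    (h : (S * (2 • P - 1)).PosDef) {w : Fin d → ℝ} (hw : P *ᵥ w = 0) (h0 : w ≠ 0) :
    Sb S w w < 0 := by
  have h1 : 0 < Sb (S * (2 • P - 1)) w w := by simpa [Sb] using h.dotProduct_mulVec_pos h0
  rw [Sb_two_smul_sub_one, hw] at h1
  have h2 : Sb S w 0 = 0 := by simp [Sb]
  linarith

lemma maxSMono_affine {d : ℕ} {S P : Matrix (Fin d) (Fin d) ℝ} (hP : P * P = P)
    (h : (S * (2 • P - 1)).PosDef) (x₀ : Fin d → ℝ) :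
    MaxSMono S {z | ∃ x : Fin d → ℝ, z = x₀ + P.mulVec (x - x₀)} := by
  constructor
  · intro x hx y hy
    rw [mem_affine_iff hP] at hx hy
    by_cases h0 : x - y = 0
    · simp [h0, Sb]
    · refine (Sb_pos_of_fixed h ?_ h0).le
      rw [← sub_sub_sub_cancel_right x y x₀, mulVec_sub, hx, hy]
  · intro H hH hGH
    refine Subset.antisymm (fun y hy => ?_) hGH
    have h1 := hH y hy _ (hGH ⟨y, rfl⟩)
    rw [mem_affine_iff hP]
    by_contra h0
    have h2 : P *ᵥ (y - (x₀ + P *ᵥ (y - x₀))) = 0 := by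
      rw [← sub_sub, mulVec_sub, mulVec_mulVec, hP, sub_self]
    refine (Sb_neg_of_ker h h2 fun h3 => h0 ?_).not_ge h1
    rw [← sub_sub, sub_eq_zero] at h3
    exact h3.symm

lemma SProj_affine {d : ℕ} {S P : Matrix (Fin d) (Fin d) ℝ} (hS : S.IsHermitian)
    (hP : P * P = P) (hSP : (S * P).IsHermitian) (h : (S * (2 • P - 1)).PosDef)
    (x₀ y : Fin d → ℝ) :
    SProj S {z | ∃ x : Fin d → ℝ, z = x₀ + P.mulVec (x - x₀)} y
      = {x₀ + P.mulVec (y - x₀)} := by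
  set p := x₀ + P *ᵥ (y - x₀) with hp
  have hker : P *ᵥ (p - y) = 0 := by
    rw [hp, add_sub_right_comm, mulVec_add, mulVec_mulVec, hP, ← mulVec_add]
    simp
  have hfix : ∀ z, P *ᵥ (z - x₀) = z - x₀ → P *ᵥ (z - p) = z - p := by
    intro z hz
    rw [hp, ← sub_sub, mulVec_sub, hz, mulVec_mulVec, hP]
  have key : ∀ z, P *ᵥ (z - x₀) = z - x₀ →
      Sb S (z - y) (z - y) = Sb S (z - p) (z - p) + Sb S (p - y) (p - y) := by
    intro z hz
    have : Sb S (z - p) (p - y) = 0 := by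
      rw [← hfix z hz, (isHermitian_mul_iff hS).1 hSP, hker]
      simp [Sb]
    rw [← Sb_add_self_of_orthogonal hS this, sub_add_sub_cancel]
  ext z
  rw [mem_singleton_iff]
  constructor
  · rintro ⟨hz, hmin⟩
    rw [mem_affine_iff hP] at hz
    have h1 := hmin p ⟨y, rfl⟩
    rw [key z hz] at h1
    by_contra hne
    have := Sb_pos_of_fixed h (hfix z hz) (sub_ne_zero.2 hne)
    linarith
  · rintro rfl
    refine ⟨⟨y, rfl⟩, fun z hz => ?_⟩
    rw [mem_affine_iff hP] at hz
    rw [key z hz]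
    by_cases h0 : z - p = 0
    · simp [h0, Sb]
    · have := Sb_pos_of_fixed h (hfix z hz) h0
      linarith

/-! ### The idempotent matrix attached to a maximal affine set -/

/-- The `S`-orthogonal projection on a subspace where the form `S` is positive definite. -/
lemma exists_Sb_orthogonal_projection {d : ℕ} {S : Matrix (Fin d) (Fin d) ℝ}
    (hS : S.IsHermitian) (V : Submodule ℝ (Fin d → ℝ))
    (hV : ∀ v ∈ V, v ≠ 0 → 0 < Sb S v v) :
    ∃ P : Matrix (Fin d) (Fin d) ℝ, (∀ x, P *ᵥ x ∈ V) ∧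
      ∀ v ∈ V, ∀ x, Sb S v (x - P *ᵥ x) = 0 := by
  have hB : ∀ x y, Matrix.toBilin' S x y = Sb S x y := fun x y => Matrix.toBilin'_apply' S x y
  have hrefl : (Matrix.toBilin' S).IsRefl := by
    intro x y hxy
    rw [hB] at hxy ⊢
    rwa [Sb_comm hS]
  have hc : IsCompl V ((Matrix.toBilin' S).orthogonal V) := by
    rw [LinearMap.BilinForm.isCompl_orthogonal_iff_disjoint hrefl, Submodule.disjoint_def]
    intro v hv hv'
    by_contra h0
    have h1 : Matrix.toBilin' S v v = 0 := hv' v hv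
    rw [hB] at h1
    exact (hV v hv h0).ne' h1
  refine ⟨LinearMap.toMatrix' (V.projection _ hc), fun x => ?_, fun v hv x => ?_⟩
  · rw [LinearMap.toMatrix'_mulVec]
    exact Submodule.projection_apply_mem hc x
  · rw [LinearMap.toMatrix'_mulVec, ← hB]
    have h1 : x - V.projection _ hc x ∈ (Matrix.toBilin' S).orthogonal V := by
      rw [← Submodule.projection_apply_eq_zero_iff hc, map_sub,
        Submodule.projection_apply_of_mem_left hc (Submodule.projection_apply_mem hc x), sub_self]
    exact h1 v hv

/-- A nonempty set stable under affine combinations of pairs of points is a translate of a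
subspace. -/
lemma exists_direction {d : ℕ} {G : Set (Fin d → ℝ)} {x₀ : Fin d → ℝ} (h₀ : x₀ ∈ G)
    (hG : ∀ x ∈ G, ∀ y ∈ G, ∀ t : ℝ, x + t • (y - x) ∈ G) :
    ∃ V : Submodule ℝ (Fin d → ℝ), ∀ v, v ∈ V ↔ x₀ + v ∈ G := by
  have hsmul : ∀ (c : ℝ) (v : Fin d → ℝ), x₀ + v ∈ G → x₀ + c • v ∈ G := by
    intro c v hv
    simpa using hG x₀ h₀ _ hv c
  refine ⟨{ carrier := {v | x₀ + v ∈ G}, zero_mem' := by simpa using h₀,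
            add_mem' := ?_, smul_mem' := fun c v hv => hsmul c v hv }, fun v => Iff.rfl⟩
  intro u v hu hv
  -- The sum is the image of the midpoint under the dilation of ratio `2` centred at `x₀`.
  have h1 := hG _ hu _ hv (1 / 2)
  have h2 : x₀ + u + (1 / 2 : ℝ) • (x₀ + v - (x₀ + u)) = x₀ + (1 / 2 : ℝ) • (u + v) := by
    ext i
    simp
    ring
  rw [h2] at h1
  simpa using hsmul 2 _ h1

lemma MaxSMono.nonempty {d : ℕ} {S : Matrix (Fin d) (Fin d) ℝ} {G : Set (Fin d → ℝ)}
    (hG : MaxSMono S G) : G.Nonempty := by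
  by_contra h
  rw [not_nonempty_iff_eq_empty] at h
  have := hG.2 {0} (by rintro x rfl y rfl; simp [Sb]) (by simp [h])
  rw [h] at this
  exact singleton_ne_empty _ this

/-- The matrix of a maximal affine strictly monotone set: `P` is the `S`-orthogonal projection
on the direction of `G`. -/
lemma MaxSMono.exists_projection {d : ℕ} {S : Matrix (Fin d) (Fin d) ℝ} (hS : S.IsHermitian)
    {G : Set (Fin d → ℝ)} (hmax : MaxSMono S G)
    (haff : ∀ x ∈ G, ∀ y ∈ G, ∀ t : ℝ, x + t • (y - x) ∈ G)
    (hpos : ∀ x ∈ G, ∀ y ∈ G, x ≠ y → 0 < Sb S (x - y) (x - y)) :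
    ∃ (x₀ : Fin d → ℝ) (P : Matrix (Fin d) (Fin d) ℝ),
        P * P = P ∧ (S * P).IsHermitian ∧ (S * P).PosSemidef ∧
        (-(S * (1 - P))).PosSemidef ∧ (S * (2 • P - 1)).PosDef ∧
        G = {z | ∃ x : Fin d → ℝ, z = x₀ + P.mulVec (x - x₀)} := by
  obtain ⟨x₀, h₀⟩ := hmax.nonempty
  obtain ⟨V, hV⟩ := exists_direction h₀ haff
  have hVpos : ∀ v ∈ V, v ≠ 0 → 0 < Sb S v v := by
    intro v hv h0
    simpa using hpos _ ((hV v).1 hv) x₀ h₀ (by simpa using h0)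
  have hVnn : ∀ v ∈ V, 0 ≤ Sb S v v := by
    intro v hv
    simpa using hmax.1 _ ((hV v).1 hv) x₀ h₀
  obtain ⟨P, hPV, hPo⟩ := exists_Sb_orthogonal_projection hS V hVpos
  have hfix : ∀ v ∈ V, P *ᵥ v = v := by
    intro v hv
    by_contra h0
    exact (hVpos (v - P *ᵥ v) (V.sub_mem hv (hPV v)) (sub_ne_zero.2 (Ne.symm h0))).ne'
      (hPo _ (V.sub_mem hv (hPV v)) v)
  have hPP : P * P = P := by
    rw [ext_iff_mulVec]
    intro x
    rw [← mulVec_mulVec, hfix _ (hPV x)]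
  have hleft : ∀ v ∈ V, ∀ x, Sb S v (P *ᵥ x) = Sb S v x := by
    intro v hv x
    conv_rhs => rw [← add_sub_cancel (P *ᵥ x) x, Sb_add_right, hPo v hv x, add_zero]
  have hsym : ∀ x y, Sb S (P *ᵥ x) y = Sb S x (P *ᵥ y) := by
    intro x y
    rw [← hleft _ (hPV x), Sb_comm hS, hleft _ (hPV y), Sb_comm hS]
  have hSP := (isHermitian_mul_iff hS).2 hsym
  have hdiag : ∀ x, Sb S x (P *ᵥ x) = Sb S (P *ᵥ x) (P *ᵥ x) := by
    intro x
    rw [hleft _ (hPV x), hsym]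
  have hpyth : ∀ x, Sb S x x
      = Sb S (P *ᵥ x) (P *ᵥ x) + Sb S (x - P *ᵥ x) (x - P *ᵥ x) := by
    intro x
    rw [← Sb_add_self_of_orthogonal hS (hPo _ (hPV x) x), add_sub_cancel]
  -- By maximality, the form is negative definite on the `S`-orthogonal complement of `V`.
  have hneg : ∀ x, 0 ≤ Sb S (x - P *ᵥ x) (x - P *ᵥ x) → x - P *ᵥ x = 0 := by
    intro x hx
    set w := x - P *ᵥ x with hw
    have hvw : ∀ y ∈ G, 0 ≤ Sb S (y - (x₀ + w)) (y - (x₀ + w)) := by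
      intro y hy
      have hv : x₀ - y ∈ V := by
        rw [← neg_sub, V.neg_mem_iff, hV]
        simpa using hy
      have h1 : y - (x₀ + w) = -((x₀ - y) + w) := by abel
      rw [h1, Sb_neg_neg, Sb_add_self_of_orthogonal hS (hPo _ hv x)]
      exact add_nonneg (hVnn _ hv) hx
    have hins : SMono S (insert (x₀ + w) G) := by
      rintro a (rfl | ha) b (rfl | hb)
      · simp [Sb]
      · rw [← neg_sub, Sb_neg_neg]
        exact hvw b hb
      · exact hvw a ha
      · exact hmax.1 a ha b hb
    have hwV : w ∈ V := by
      rw [hV, ← hmax.2 _ hins (subset_insert _ _)]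
      exact mem_insert _ _
    by_contra h0
    exact (hVpos w hwV h0).ne' (hPo w hwV x)
  have hnp : ∀ x, Sb S (x - P *ᵥ x) (x - P *ᵥ x) ≤ 0 := by
    intro x
    by_contra! h
    have := hneg x h.le
    rw [this] at h
    simp [Sb] at h
  have hherm : ∀ a b : ℝ, (a • S + b • (S * P)).IsHermitian := by
    intro a b
    exact (hS.smul (IsSelfAdjoint.all a)).add (hSP.smul (IsSelfAdjoint.all b))
  refine ⟨x₀, P, hPP, hSP, ?_, ?_, ?_, ?_⟩
  · refine .of_dotProduct_mulVec_nonneg hSP fun x => ?_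
    change 0 ≤ Sb (S * P) x x
    rw [Sb_mul, hdiag]
    exact hVnn _ (hPV x)
  · refine .of_dotProduct_mulVec_nonneg ?_ fun x => ?_
    · convert hherm (-1) 1 using 1
      rw [mul_sub, mul_one, neg_smul, one_smul, one_smul]
      abel
    · change 0 ≤ Sb (-(S * (1 - P))) x x
      have h1 : Sb (-(S * (1 - P))) x x = Sb S x (P *ᵥ x) - Sb S x x := by
        rw [← mul_neg, Sb_mul, neg_sub, sub_mulVec, one_mulVec]
        simp [Sb, mulVec_sub, dotProduct_sub]
      rw [h1, hdiag, hpyth x]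
      linarith [hnp x]
  · refine .of_dotProduct_mulVec_pos ?_ fun x hx => ?_
    · convert hherm (-1) 2 using 1
      rw [mul_sub, mul_one, mul_smul_comm, neg_smul, one_smul, two_smul, two_smul]
      abel
    · change 0 < Sb (S * (2 • P - 1)) x x
      rw [Sb_two_smul_sub_one, hdiag, hpyth x]
      by_cases h0 : P *ᵥ x = 0
      · have h1 : Sb S (x - P *ᵥ x) (x - P *ᵥ x) ≠ 0 := by
          intro h
          have := hneg x h.ge
          rw [h0, sub_zero] at this
          exact hx this
        have h2 := (hnp x).lt_of_ne h1
        linarith [hVnn _ (hPV x)]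
      · linarith [hVpos _ (hPV x) h0, hnp x]
  · ext z
    rw [mem_affine_iff hPP, ← add_sub_cancel x₀ z, ← hV, add_sub_cancel_left]
    exact ⟨hfix _, fun h => h ▸ hPV _⟩

/-! ### The characterization -/

/-- Theorem 8: characterization of the affine maximal strictly
`S`-monotone sets: they are exactly the sets `G = {x₀ + P(x - x₀)}` for an idempotent
matrix `P` with `SP` symmetric, `SP ≥ 0`, `S(I-P) ≤ 0` and `S(2P-I) > 0`; and in this
case the `S`-projection on `G` is `P_G(y) = x₀ + P(y - x₀)`. -/
theorem affine_maximal_strictly_monotone_characterization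
    (d m : ℕ) (S : Matrix (Fin d) (Fin d) ℝ) (hS : S.IsHermitian)
    (hrank : IsUnit S.det)
    (hm : Nat.card {i : Fin d // 0 < hS.eigenvalues i} = m)
    (G : Set (Fin d → ℝ)) :
    ((MaxSMono S G ∧
        (∀ x ∈ G, ∀ y ∈ G, ∀ t : ℝ, x + t • (y - x) ∈ G) ∧
        (∀ x ∈ G, ∀ y ∈ G, x ≠ y → 0 < Sb S (x - y) (x - y))) ↔
      (∃ (x₀ : Fin d → ℝ) (P : Matrix (Fin d) (Fin d) ℝ),
        P * P = P ∧ (S * P).IsHermitian ∧ (S * P).PosSemidef ∧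
        (-(S * (1 - P))).PosSemidef ∧ (S * (2 • P - 1)).PosDef ∧
        G = {z | ∃ x : Fin d → ℝ, z = x₀ + P.mulVec (x - x₀)})) ∧
    (∀ (x₀ : Fin d → ℝ) (P : Matrix (Fin d) (Fin d) ℝ),
      P * P = P → (S * P).IsHermitian → (S * P).PosSemidef →
      (-(S * (1 - P))).PosSemidef → (S * (2 • P - 1)).PosDef →
      G = {z | ∃ x : Fin d → ℝ, z = x₀ + P.mulVec (x - x₀)} →
      ∀ y : Fin d → ℝ, SProj S G y = {x₀ + P.mulVec (y - x₀)}) := by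
  refine ⟨⟨fun ⟨hmax, haff, hpos⟩ => hmax.exists_projection hS haff hpos, ?_⟩, ?_⟩
  · rintro ⟨x₀, P, hP, -, -, -, hdef, rfl⟩
    refine ⟨maxSMono_affine hP hdef x₀, ?_, ?_⟩
    · intro x hx y hy t
      rw [mem_affine_iff hP] at hx hy ⊢
      rw [add_sub_right_comm, mulVec_add, mulVec_smul, hx, ← sub_sub_sub_cancel_right y x x₀,
        mulVec_sub, hx, hy]
    · intro x hx y hy hne
      rw [mem_affine_iff hP] at hx hy
      refine Sb_pos_of_fixed hdef ?_ (sub_ne_zero.2 hne)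
      rw [← sub_sub_sub_cancel_right x y x₀, mulVec_sub, hx, hy]
  · rintro x₀ P hP hSP - - hdef rfl y
    exact SProj_affine hS hP hSP hdef x₀ y


end
end
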